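/- arXiv:2408.03428 — 6 statements merged into one kernel-verified Lean document; each statement's English description precedes it below -/
import Mathlib

section
/- Let σ>0, g>0, γ∈ℝ, and let c₁<0 be a real number satisfying c₁⁴=4σ(g+c₁γ). If c<0 and k<0 are real numbers satisfying the dispersion relation σk²+c²k+(g+cγ)=0, then c≤c₁. Moreover, if c=c₁, then necessarily k=−c₁²/(2σ). -/
/-- For σ>0, g>0, γ∈ℝ and c₁<0 with c₁⁴=4σ(g+c₁γ): if c<0 and k<0 satisfy the
dispersion relation σk²+c²k+(g+cγ)=0 then c ≤ c₁, with equality forcing k=−c₁²/(2σ). -/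
theorem cPlus_global_max (σ g γ c₁ : ℝ) (hσ : 0 < σ) (hg : 0 < g) (hc₁ : c₁ < 0)
    (hcrit : c₁ ^ 4 = 4 * σ * (g + c₁ * γ))
    (c k : ℝ) (hc : c < 0) (hk : k < 0)
    (hdisp : σ * k ^ 2 + c ^ 2 * k + (g + c * γ) = 0) :
    c ≤ c₁ ∧ (c = c₁ → k = -c₁ ^ 2 / (2 * σ)) := by
  have hsq : (2 * σ * k + c ^ 2) ^ 2 = c ^ 4 - 4 * σ * (g + c * γ) := by
    linear_combination 4 * σ * hdisp
  constructor
  · by_contra h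
    push Not at h
    have hf : 0 ≤ c ^ 4 - 4 * σ * (g + c * γ) := hsq ▸ sq_nonneg _
    have h1 : c₁ * (c ^ 4 - 4 * σ * (g + c * γ)) ≤ 0 :=
      mul_nonpos_of_nonpos_of_nonneg hc₁.le hf
    have h2 : c₁ * (c ^ 4 - 4 * σ * (g + c * γ))
        = (c * c₁) * ((c - c₁) * (c ^ 2 + c * c₁ + c₁ ^ 2)) + 4 * σ * g * (c - c₁) := by
      linear_combination c * hcrit
    have h3 : 0 < c * c₁ := mul_pos_of_neg_of_neg hc hc₁
    have h4 : 0 < c - c₁ := sub_pos.mpr h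
    have h5 : 0 < (c * c₁) * ((c - c₁) * (c ^ 2 + c * c₁ + c₁ ^ 2))
        + 4 * σ * g * (c - c₁) := by positivity
    linarith
  · rintro rfl
    have h0 : (2 * σ * k + c ^ 2) ^ 2 = 0 := by rw [hsq, hcrit, sub_self]
    have h1 : 2 * σ * k + c ^ 2 = 0 := pow_eq_zero_iff (two_ne_zero) |>.mp h0
    rw [eq_div_iff (by positivity)]
    linarith
end

section
/- Let σ>0, g≥0, and let c, γ be real numbers with cγ>0 and c⁴=4σ(g+cγ). Set ω₀=c²/(2σ). Then (3σ/2)ω₀³ ≥ 3γ², and in particular (3σ/2)ω₀³ − γ² > 0. -/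
/-- For σ>0, g≥0 and c,γ with cγ>0 satisfying the criticality condition c⁴=4σ(g+cγ),
the quantity ω₀=c²/(2σ) satisfies (3σ/2)ω₀³ ≥ 3γ², hence (3σ/2)ω₀³ − γ² > 0. -/
theorem focusing_favorable_vorticity (σ g c γ : ℝ) (hσ : 0 < σ) (hg : 0 ≤ g)
    (hcγ : 0 < c * γ) (hcrit : c ^ 4 = 4 * σ * (g + c * γ)) :
    3 * γ ^ 2 ≤ (3 * σ / 2) * (c ^ 2 / (2 * σ)) ^ 3 ∧
      0 < (3 * σ / 2) * (c ^ 2 / (2 * σ)) ^ 3 - γ ^ 2 := by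
  have hc : c ≠ 0 := left_ne_zero_of_mul hcγ.ne'
  have hγ : γ ≠ 0 := right_ne_zero_of_mul hcγ.ne'
  have hc2 : 0 < c ^ 2 := by positivity
  have hγ2 : 0 < γ ^ 2 := by positivity
  have h1 : 4 * σ * (c * γ) ≤ c ^ 4 := by
    rw [hcrit]
    have : 0 ≤ 4 * σ * g := by positivity
    linarith
  have h2 : (4 * σ * (c * γ)) ^ 2 ≤ (c ^ 4) ^ 2 :=
    pow_le_pow_left₀ (by positivity) h1 2
  have h3 : 16 * σ ^ 2 * γ ^ 2 ≤ c ^ 6 := by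
    refine le_of_mul_le_mul_left ?_ hc2
    linarith
  have h4 : (3 * σ / 2) * (c ^ 2 / (2 * σ)) ^ 3 = 3 * c ^ 6 / (16 * σ ^ 2) := by
    field_simp
    ring
  have h5 : 3 * γ ^ 2 ≤ (3 * σ / 2) * (c ^ 2 / (2 * σ)) ^ 3 := by
    rw [h4, le_div_iff₀ (by positivity)]
    linarith
  exact ⟨h5, by linarith⟩
end

section
/- For every real G>0, one has y₀(G) ≥ 2G; consequently the discriminant of the quadratic x² − √(2y₀(G))·x + (y₀(G) − G + G/√(2y₀(G))) is negative, i.e. −2y₀(G) + 4G − 4G/√(2y₀(G)) < 0, and this quadratic is strictly positive for every real x (it has no real roots). -/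
/-- z₀(G) = 32G³+27G²+3√3·√(27G⁴+64G⁵). -/
noncomputable def z₀ (G : ℝ) : ℝ :=
  32 * G ^ 3 + 27 * G ^ 2 + 3 * Real.sqrt 3 * Real.sqrt (27 * G ^ 4 + 64 * G ^ 5)

/-- z₁(G) = 2^{5/3}·G·z₀(G)^{−1/3}. -/
noncomputable def z₁ (G : ℝ) : ℝ :=
  (2 : ℝ) ^ ((5 : ℝ) / 3) * G * (z₀ G) ^ (-(1 : ℝ) / 3)

/-- y₀(G) = (2G/3)·(1+z₁(G)+z₁(G)⁻¹), a root of the resolvent cubic. -/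
noncomputable def y₀ (G : ℝ) : ℝ :=
  (2 * G / 3) * (1 + z₁ G + (z₁ G)⁻¹)

/-- The quartic P_G(k)=k⁴−2Gk²+2Gk+G² determining the critical frequencies. -/
noncomputable def P (G k : ℝ) : ℝ :=
  k ^ 4 - 2 * G * k ^ 2 + 2 * G * k + G ^ 2

/-- The discriminant D(G)=−2y₀(G)+4G+4G/√(2y₀(G)). -/
noncomputable def Dd (G : ℝ) : ℝ :=
  -2 * y₀ G + 4 * G + 4 * G / Real.sqrt (2 * y₀ G)

/-- The critical frequency closer to the origin, ω̃₊(G)=(−√(2y₀(G))+√(D(G)))/2. -/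
noncomputable def ωp (G : ℝ) : ℝ :=
  (-Real.sqrt (2 * y₀ G) + Real.sqrt (Dd G)) / 2

/-- The critical frequency farther from the origin, ω̃₋(G)=(−√(2y₀(G))−√(D(G)))/2. -/
noncomputable def ωm (G : ℝ) : ℝ :=
  (-Real.sqrt (2 * y₀ G) - Real.sqrt (Dd G)) / 2

/-- The focusing-condition function f(V)=−(3/2)·V·ω̃₊(1/V)³−1. -/
noncomputable def fV (V : ℝ) : ℝ :=
  -(3 / 2) * V * (ωp (1 / V)) ^ 3 - 1

/-- For G>0, y₀(G) ≥ 2G; hence the discriminant of x²−√(2y₀)x+(y₀−G+G/√(2y₀)) is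
negative and this quadratic is strictly positive for every real x. -/
theorem first_quadratic_no_real_roots (G : ℝ) (hG : 0 < G) :
    2 * G ≤ y₀ G ∧
      -2 * y₀ G + 4 * G - 4 * G / Real.sqrt (2 * y₀ G) < 0 ∧
      ∀ x : ℝ, 0 < x ^ 2 - Real.sqrt (2 * y₀ G) * x
        + (y₀ G - G + G / Real.sqrt (2 * y₀ G)) := by
  have hz0 : 0 < z₀ G := by unfold z₀; positivity
  have hz1 : 0 < z₁ G := by unfold z₁; positivity
  have hy : 2 * G ≤ y₀ G := by
    have h2 : 2 ≤ z₁ G + (z₁ G)⁻¹ := by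
      have hm : z₁ G * (z₁ G)⁻¹ = 1 := mul_inv_cancel₀ hz1.ne'
      have hi : 0 < (z₁ G)⁻¹ := inv_pos.mpr hz1
      nlinarith [sq_nonneg (z₁ G - (z₁ G)⁻¹)]
    unfold y₀
    nlinarith
  have hs : 0 < Real.sqrt (2 * y₀ G) := Real.sqrt_pos.mpr (by linarith)
  have hsq : Real.sqrt (2 * y₀ G) ^ 2 = 2 * y₀ G := Real.sq_sqrt (by linarith)
  have hd : 0 < G / Real.sqrt (2 * y₀ G) := div_pos hG hs
  refine ⟨hy, ?_, fun x => ?_⟩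
  · rw [mul_div_assoc]
    linarith
  · nlinarith [sq_nonneg (x - Real.sqrt (2 * y₀ G) / 2)]
end

section
/- For every real G>0, the discriminant D(G)=−2y₀(G)+4G+4G/√(2y₀(G)) is strictly positive, the numbers ω̃₊(G)=(−√(2y₀(G))+√(D(G)))/2 and ω̃₋(G)=(−√(2y₀(G))−√(D(G)))/2 satisfy ω̃₋(G)<ω̃₊(G)<0 and P_G(ω̃₊(G))=P_G(ω̃₋(G))=0, and every real root of P_G equals ω̃₊(G) or ω̃₋(G). -/
/-- The third power of `z₁`. -/
lemma z₁_cube (G : ℝ) (hG : 0 < G) : 0 < z₀ G ∧ 0 < z₁ G ∧ z₁ G ^ 3 * z₀ G = 32 * G ^ 3 := by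
  have h0 : 0 < z₀ G := by unfold z₀; positivity
  have h1 : 0 < z₁ G := by unfold z₁; positivity
  refine ⟨h0, h1, ?_⟩
  have ha : ((2 : ℝ) ^ ((5 : ℝ) / 3)) ^ 3 = 32 := by
    rw [← Real.rpow_natCast, ← Real.rpow_mul (by norm_num)]
    norm_num
  have hb : ((z₀ G) ^ (-(1 : ℝ) / 3)) ^ 3 = (z₀ G)⁻¹ := by
    rw [← Real.rpow_natCast, ← Real.rpow_mul h0.le, ← Real.rpow_neg_one]
    norm_num
  unfold z₁
  rw [mul_pow, mul_pow, ha, hb]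
  field_simp

/-- `z₀` solves a quadratic equation. -/
lemma z₀_quad (G : ℝ) (hG : 0 < G) :
    z₀ G ^ 2 + 1024 * G ^ 6 = 2 * (32 * G ^ 3 + 27 * G ^ 2) * z₀ G := by
  unfold z₀
  have h3 : Real.sqrt 3 ^ 2 = 3 := Real.sq_sqrt (by norm_num)
  have h4 : Real.sqrt (27 * G ^ 4 + 64 * G ^ 5) ^ 2 = 27 * G ^ 4 + 64 * G ^ 5 :=
    Real.sq_sqrt (by positivity)
  have h5 : (3 * Real.sqrt 3 * Real.sqrt (27 * G ^ 4 + 64 * G ^ 5)) ^ 2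
      = 27 * (27 * G ^ 4 + 64 * G ^ 5) := by
    rw [mul_pow, mul_pow, h3, h4]; ring
  linear_combination h5

/-- The resolvent cubic. -/
lemma y₀_cubic (G : ℝ) (hG : 0 < G) :
    0 < y₀ G ∧ (2 * y₀ G) ^ 3 = 4 * G * (2 * y₀ G) ^ 2 + 4 * G ^ 2 := by
  obtain ⟨h0, h1, h3⟩ := z₁_cube G hG
  have hq := z₀_quad G hG
  unfold y₀
  generalize z₁ G = z at *
  generalize z₀ G = t at *
  refine ⟨by positivity, ?_⟩
  have ht : t = 32 * G ^ 3 / z ^ 3 := by field_simp; linarith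
  subst ht
  have hz : 16 * G * (z ^ 6 + 1) = (32 * G + 27) * z ^ 3 := by
    field_simp at hq
    linear_combination hq / 64
  field_simp
  linear_combination 4 * hz

/-- For G>0, the discriminant D(G) is positive, ω̃₋(G) < ω̃₊(G) < 0 are roots of the
quartic P_G, and every real root of P_G is one of them. -/
theorem critical_frequencies (G : ℝ) (hG : 0 < G) :
    0 < Dd G ∧ ωm G < ωp G ∧ ωp G < 0 ∧
      P G (ωp G) = 0 ∧ P G (ωm G) = 0 ∧
      ∀ k : ℝ, P G k = 0 → k = ωp G ∨ k = ωm G := by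
  obtain ⟨hy, hc⟩ := y₀_cubic G hG
  obtain ⟨s, hs⟩ : ∃ s, s = Real.sqrt (2 * y₀ G) := ⟨_, rfl⟩
  have hs0 : 0 < s := by rw [hs]; exact Real.sqrt_pos.2 (by linarith)
  have hsq : 2 * y₀ G = s ^ 2 := by rw [hs, Real.sq_sqrt (by linarith)]
  rw [hsq] at hc
  have hD : Dd G = -s ^ 2 + 4 * G + 4 * G / s := by
    unfold Dd; rw [← hs]; linear_combination -hsq
  obtain ⟨q, hq⟩ : ∃ q, q = G / s := ⟨_, rfl⟩
  have hq0 : 0 < q := by rw [hq]; positivity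
  have hqs : G = q * s := by rw [hq]; field_simp
  have hD' : Dd G = -s ^ 2 + 4 * G + 4 * q := by rw [hD, hq]; ring
  -- the resolvent in terms of `q`
  have hr : (s ^ 2 - 2 * G) ^ 2 = 4 * G ^ 2 + 4 * q ^ 2 := by
    have : s ^ 2 * (s ^ 2 - 2 * G) ^ 2 = s ^ 2 * (4 * G ^ 2 + 4 * q ^ 2) := by
      linear_combination hc + 4 * (G + q * s) * hqs
    exact mul_left_cancel₀ (by positivity) this
  have hm : 4 * G < s ^ 2 := by
    by_contra! h
    nlinarith [mul_nonneg (sq_nonneg s) (sub_nonneg.2 h), sq_pos_of_pos hq0, sq_pos_of_pos hs0]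
  have hup : s ^ 2 - 2 * G < 2 * G + 2 * q := by nlinarith [mul_pos hG hq0]
  have hlo : 2 * q < s ^ 2 - 2 * G := by nlinarith [sq_pos_of_pos hG]
  have hDpos : 0 < Dd G := by rw [hD']; linarith
  obtain ⟨d, hd⟩ : ∃ d, d = Real.sqrt (Dd G) := ⟨_, rfl⟩
  have hd0 : 0 < d := by rw [hd]; exact Real.sqrt_pos.2 hDpos
  have hdq : d ^ 2 = -s ^ 2 + 4 * G + 4 * q := by rw [hd, Real.sq_sqrt hDpos.le, hD']
  have hp : ωp G = (-s + d) / 2 := by unfold ωp; rw [← hs, ← hd]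
  have hmm : ωm G = (-s - d) / 2 := by unfold ωm; rw [← hs, ← hd]
  have hfac : ∀ k, P G k = ((k - ωp G) * (k - ωm G)) * (k ^ 2 - s * k + (s ^ 2 - 2 * G + 2 * q) / 2) := by
    intro k
    have e : (k - ωp G) * (k - ωm G) = k ^ 2 + s * k + (s ^ 2 - 2 * G - 2 * q) / 2 := by
      rw [hp, hmm]; linear_combination (-1 / 4) * hdq
    rw [e]; unfold P
    linear_combination (-1 / 4) * hr + 2 * k * hqs
  refine ⟨hDpos, by rw [hp, hmm]; linarith, ?_, by rw [hfac]; ring, by rw [hfac]; ring, ?_⟩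
  · rw [hp]
    have : d < s := by nlinarith
    linarith
  · intro k hk
    rw [hfac] at hk
    have : 0 < k ^ 2 - s * k + (s ^ 2 - 2 * G + 2 * q) / 2 := by nlinarith [sq_nonneg (2 * k - s)]
    rcases mul_eq_zero.1 hk with h | h
    · rcases mul_eq_zero.1 h with h | h
      · left; linarith
      · right; linarith
    · linarith
end

section
/- For every real V with 0<V<10⁻⁶, one has f(V)>0, where f(V)=−(3/2)·V·ω̃₊(1/V)³−1. -/
lemma aux_z₁_pos (G : ℝ) (hG : 0 < G) : 0 < z₁ G := by
  have h : 0 < z₀ G := by unfold z₀; positivity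
  unfold z₁
  positivity

lemma aux_y₀_ge (G : ℝ) (hG : 0 < G) : 2 * G ≤ y₀ G := by
  have hz := aux_z₁_pos G hG
  have h2 : 2 ≤ z₁ G + (z₁ G)⁻¹ := by
    have h1 : z₁ G * (z₁ G)⁻¹ = 1 := mul_inv_cancel₀ hz.ne'
    have h3 : 0 < (z₁ G)⁻¹ := inv_pos.mpr hz
    nlinarith [sq_nonneg (z₁ G - (z₁ G)⁻¹)]
  unfold y₀
  nlinarith

/-- With `G = g ^ 2`, `g > 1000`, the frequency satisfies `ωp G ≤ -g / 2`. -/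
lemma aux_ωp_le (g : ℝ) (hg : 1000 < g) : ωp (g ^ 2) ≤ -(g / 2) := by
  have hy := aux_y₀_ge (g ^ 2) (by positivity)
  have hs : 2 * g ≤ Real.sqrt (2 * y₀ (g ^ 2)) := by
    apply Real.le_sqrt_of_sq_le
    nlinarith
  have hq : 4 * g ^ 2 / Real.sqrt (2 * y₀ (g ^ 2)) ≤ 2 * g := by
    rw [div_le_iff₀ (by linarith)]
    nlinarith
  have hD : Real.sqrt (Dd (g ^ 2)) ≤ g := by
    apply Real.sqrt_le_iff.mpr
    refine ⟨by linarith, ?_⟩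
    unfold Dd
    nlinarith
  unfold ωp
  linarith

/-- For 0<V<10⁻⁶ the focusing-condition function is positive: f(V)>0. -/
theorem focusing_holds_small_V (V : ℝ) (hV0 : 0 < V) (hV : V < 1 / 10 ^ 6) :
    0 < fV V := by
  have hG : (10 : ℝ) ^ 6 < 1 / V := by
    rw [lt_div_iff₀ hV0]
    norm_num at hV ⊢
    linarith
  obtain ⟨g, hg, hgV⟩ : ∃ g : ℝ, 1000 < g ∧ g ^ 2 = 1 / V := by
    refine ⟨Real.sqrt (1 / V), ?_, Real.sq_sqrt (by positivity)⟩
    apply Real.lt_sqrt_of_sq_lt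
    norm_num at hG ⊢
    exact hG
  have hω := aux_ωp_le g hg
  have hVg : V * g ^ 2 = 1 := by rw [hgV]; field_simp
  unfold fV
  rw [← hgV]
  have h3 : (g / 2) ^ 3 ≤ (-ωp (g ^ 2)) ^ 3 :=
    pow_le_pow_left₀ (by linarith) (by linarith) 3
  have h4 : V * (g / 2) ^ 3 ≤ V * (-ωp (g ^ 2)) ^ 3 :=
    mul_le_mul_of_nonneg_left h3 hV0.le
  have h5 : V * (g / 2) ^ 3 = g / 8 := by
    linear_combination g / 8 * hVg
  have h6 : V * (-ωp (g ^ 2)) ^ 3 = -(V * ωp (g ^ 2) ^ 3) := by ring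
  linarith
end

section
/- There exists exactly one real number V_* in the interval [10⁻⁶,10⁶] with f(V_*)=0; this V_* lies in the interval [0.110335, 0.110336]; moreover f(V)>0 for every real V with 0<V<V_*, and f(V)<0 for every real V with V>V_*. -/
lemma z0_pos {G : ℝ} (hG : 0 < G) : 0 < z₀ G := by
  unfold z₀; positivity

lemma z0_quad {G : ℝ} (hG : 0 < G) :
    z₀ G ^ 2 - (64 * G ^ 3 + 54 * G ^ 2) * z₀ G + (32 * G ^ 3) ^ 2 = 0 := by
  have h3 : Real.sqrt 3 ^ 2 = 3 := Real.sq_sqrt (by norm_num)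
  have hR : Real.sqrt (27 * G ^ 4 + 64 * G ^ 5) ^ 2 = 27 * G ^ 4 + 64 * G ^ 5 :=
    Real.sq_sqrt (by positivity)
  unfold z₀
  set s := Real.sqrt 3
  set R := Real.sqrt (27 * G ^ 4 + 64 * G ^ 5)
  linear_combination 9 * R ^ 2 * h3 + 27 * hR

lemma z1_pos {G : ℝ} (hG : 0 < G) : 0 < z₁ G := by
  have := z0_pos hG
  unfold z₁; positivity

lemma z1_cube {G : ℝ} (hG : 0 < G) : z₁ G ^ 3 * z₀ G = 32 * G ^ 3 := by
  have h0 := z0_pos hG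
  have h1 : ((2 : ℝ) ^ ((5 : ℝ) / 3)) ^ 3 = 32 := by
    rw [← Real.rpow_natCast, ← Real.rpow_mul (by norm_num)]
    norm_num
  have h2 : ((z₀ G) ^ (-(1 : ℝ) / 3)) ^ 3 = (z₀ G)⁻¹ := by
    rw [← Real.rpow_natCast, ← Real.rpow_mul h0.le, ← Real.rpow_neg_one]
    norm_num
  unfold z₁
  rw [mul_pow, mul_pow, h1, h2]
  field_simp

lemma y0_cubic {G : ℝ} (hG : 0 < G) :
    (2 * y₀ G) ^ 3 - 4 * G * (2 * y₀ G) ^ 2 - 4 * G ^ 2 = 0 := by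
  have h0 := z0_pos hG
  have hz := z1_pos hG
  have hc := z1_cube hG
  have hq := z0_quad hG
  have hs : 16 * G * (z₁ G ^ 6 + 1) = (32 * G + 27) * z₁ G ^ 3 := by
    have e : z₁ G ^ 3 = 32 * G ^ 3 / z₀ G := by field_simp; linarith
    have e6 : z₁ G ^ 6 = (32 * G ^ 3 / z₀ G) ^ 2 := by rw [← e]; ring
    rw [e6, e]
    field_simp
    linear_combination 16 * hq
  unfold y₀
  set z := z₁ G
  field_simp
  linear_combination 4 * G ^ 2 * hs

lemma wp_param {G : ℝ} (hG : 0 < G) :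
    ∃ r : ℝ, 1 < r ∧ G = (r - 1) * (r + 1) ^ 3 / 4 ∧ ωp G = -((r ^ 2 - 1) / 2) := by
  have hz := z1_pos hG
  have hy : 0 < 2 * y₀ G := by unfold y₀; positivity
  have hcub := y0_cubic hG
  have hs : 0 < Real.sqrt (2 * y₀ G) := Real.sqrt_pos.2 hy
  have hs2 : Real.sqrt (2 * y₀ G) ^ 2 = 2 * y₀ G := Real.sq_sqrt hy.le
  have hD : Dd G = -(Real.sqrt (2 * y₀ G)) ^ 2 + 4 * G + 4 * G / Real.sqrt (2 * y₀ G) := by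
    rw [hs2]; unfold Dd; ring
  rw [← hs2] at hcub
  unfold ωp
  rw [hD]
  clear hD hy hs2 hz
  set s := Real.sqrt (2 * y₀ G)
  clear_value s
  have hY : 4 * G < s ^ 2 := by
    by_contra h
    push Not at h
    nlinarith [mul_nonneg (sq_nonneg (s ^ 2)) (sub_nonneg.2 h), pow_pos hG 2]
  have hs3 : 2 * G < s ^ 3 := by
    apply lt_of_pow_lt_pow_left₀ 2 (by positivity)
    nlinarith [mul_pos hG (pow_pos hs 4)]
  have hDpos : 0 < -s ^ 2 + 4 * G + 4 * G / s := by
    have e : -s ^ 2 + 4 * G + 4 * G / s = 4 * G / s ^ 4 * (s ^ 3 - G) := by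
      field_simp
      linear_combination (-1) * hcub
    rw [e]
    have : 0 < s ^ 3 - G := by linarith
    positivity
  set d := Real.sqrt (-s ^ 2 + 4 * G + 4 * G / s) with hd
  have hdpos : 0 < d := Real.sqrt_pos.2 hDpos
  have hd2 : d ^ 2 = -s ^ 2 + 4 * G + 4 * G / s := Real.sq_sqrt hDpos.le
  clear_value d
  obtain ⟨m, hm⟩ : ∃ m, m = G / s := ⟨_, rfl⟩
  have hmp : 0 < m := by rw [hm]; positivity
  have hms : m * s = G := by rw [hm]; field_simp
  have hd2' : d ^ 2 = -s ^ 2 + 4 * G + 4 * m := by rw [hd2, hm]; ring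
  -- q r = G^2
  have hqr : (s ^ 2 / 2 - G - m) * (s ^ 2 / 2 - G + m) = G ^ 2 := by
    have : s ^ 2 * ((s ^ 2 / 2 - G - m) * (s ^ 2 / 2 - G + m) - G ^ 2) = 0 := by
      linear_combination hcub / 4 - (m * s + G) * hms
    have h2 := (mul_eq_zero.1 this).resolve_left (by positivity)
    linarith
  have hrpos : 0 < s ^ 2 / 2 - G + m := by linarith
  have hq : 0 < s ^ 2 / 2 - G - m := by
    by_contra h
    push Not at h
    nlinarith [mul_nonneg (neg_nonneg.2 h) hrpos.le, pow_pos hG 2]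
  have hqG : s ^ 2 / 2 - G - m < G := by
    by_contra h
    push Not at h
    nlinarith
  obtain ⟨a, ha⟩ : ∃ a, a = (s - d) / 2 := ⟨_, rfl⟩
  have hab : a * ((s + d) / 2) = s ^ 2 / 2 - G - m := by
    rw [ha]; linear_combination (-1 / 4) * hd2'
  have hapos : 0 < a := by
    by_contra h
    push Not at h
    nlinarith [mul_nonneg (neg_nonneg.2 h) (by positivity : 0 ≤ (s + d) / 2)]
  have haG : a ^ 2 < G := by
    have : a < (s + d) / 2 := by rw [ha]; linarith
    nlinarith
  have hquad : a ^ 2 - s * a + (s ^ 2 / 2 - G - m) = 0 := by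
    rw [ha]; linear_combination (1 / 4) * hd2'
  have hquart : (G - a ^ 2) ^ 2 = 2 * G * a := by
    linear_combination (a ^ 2 + s * a + (s ^ 2 / 2 - G + m)) * hquad - hqr + 2 * a * hms
  have hr2 : Real.sqrt (1 + 2 * a) ^ 2 = 1 + 2 * a := Real.sq_sqrt (by linarith)
  have hr1 : 1 < Real.sqrt (1 + 2 * a) := by
    rw [Real.lt_sqrt (by norm_num)]; linarith
  refine ⟨Real.sqrt (1 + 2 * a), hr1, ?_, ?_⟩
  · set r := Real.sqrt (1 + 2 * a)
    have hae : a = (r ^ 2 - 1) / 2 := by linarith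
    have hf : (G - a ^ 2 - a - a * r) * (G - a ^ 2 - a + a * r) = 0 := by
      linear_combination hquart - a ^ 2 * hr2
    rcases mul_eq_zero.1 hf with h | h
    · have : G = a ^ 2 + a + a * r := by linarith
      rw [this, hae]; ring
    · exfalso
      have := mul_pos hapos (sub_pos.2 hr1)
      linarith
  · rw [hr2]; linarith

lemma fV_param {V : ℝ} (hV : 0 < V) :
    ∃ r : ℝ, 1 < r ∧ 1 / V = (r - 1) * (r + 1) ^ 3 / 4 ∧ fV V = 3 / 4 * (r - 1) ^ 2 - 1 := by
  obtain ⟨r, hr, hG, hw⟩ := wp_param (one_div_pos.2 hV)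
  refine ⟨r, hr, hG, ?_⟩
  have h1 : V * ((r - 1) * (r + 1) ^ 3 / 4) = 1 := by rw [← hG]; field_simp
  unfold fV
  rw [hw]
  linear_combination (3 / 4 * (r - 1) ^ 2) * h1

lemma g_mono {r t : ℝ} (hr : 1 < r) (h : r ≤ t) :
    (r - 1) * (r + 1) ^ 3 / 4 ≤ (t - 1) * (t + 1) ^ 3 / 4 := by
  have : 0 ≤ r - 1 := by linarith
  have : 0 ≤ r + 1 := by linarith
  have : 0 ≤ t - 1 := by linarith
  gcongr


/-- There is exactly one root V_* of f in [10⁻⁶,10⁶]; it lies in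
[0.110335, 0.110336], f(V)>0 for 0<V<V_*, and f(V)<0 for V>V_*. -/
theorem critical_value_Vstar :
    ∃ Vstar : ℝ,
      Vstar ∈ Set.Icc (1 / 10 ^ 6 : ℝ) ((10 : ℝ) ^ 6) ∧ fV Vstar = 0 ∧
      (∀ V ∈ Set.Icc (1 / 10 ^ 6 : ℝ) ((10 : ℝ) ^ 6), fV V = 0 → V = Vstar) ∧
      Vstar ∈ Set.Icc (0.110335 : ℝ) (0.110336 : ℝ) ∧
      (∀ V : ℝ, 0 < V → V < Vstar → 0 < fV V) ∧
      (∀ V : ℝ, Vstar < V → fV V < 0) := by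
  have h3 : Real.sqrt 3 ^ 2 = 3 := Real.sq_sqrt (by norm_num)
  have hl : (1.7320508 : ℝ) < Real.sqrt 3 := by
    rw [Real.lt_sqrt (by norm_num)]; norm_num
  have hu : Real.sqrt 3 < (1.7320509 : ℝ) := by
    rw [Real.sqrt_lt' (by norm_num)]; norm_num
  obtain ⟨q, hq⟩ : ∃ q, q = 2 / 3 * Real.sqrt 3 := ⟨_, rfl⟩
  have hq2 : q ^ 2 = 4 / 3 := by rw [hq]; linear_combination 4 / 9 * h3
  have hql : (1.1547005 : ℝ) < q := by rw [hq]; linarith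
  have hqu : q < (1.1547006 : ℝ) := by rw [hq]; linarith
  have hg : q * (q + 2) ^ 3 / 4 = 40 / 9 + 4 * q := by
    linear_combination (q ^ 2 / 4 + 3 / 2 * q + 10 / 3) * hq2
  have hgp : 0 < 40 / 9 + 4 * q := by linarith
  obtain ⟨W, hW⟩ : ∃ W, W = 1 / (40 / 9 + 4 * q) := ⟨_, rfl⟩
  have hWp : 0 < W := by rw [hW]; positivity
  have hWl : (0.110335 : ℝ) ≤ W := by
    rw [hW, le_div_iff₀ hgp]; linarith
  have hWu : W ≤ (0.110336 : ℝ) := by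
    rw [hW, div_le_iff₀ hgp]; linarith
  have hWi : 1 / W = q * (q + 2) ^ 3 / 4 := by rw [hW, hg, one_div_one_div]
  have hg' : (1 + q - 1) * (1 + q + 1) ^ 3 / 4 = q * (q + 2) ^ 3 / 4 := by ring
  have hpos : ∀ V : ℝ, 0 < V → V < W → 0 < fV V := by
    intro V hV hVW
    obtain ⟨r, hr, hG, hf⟩ := fV_param hV
    have h1 : 1 / W < 1 / V := one_div_lt_one_div_of_lt hV hVW
    have h2 : 1 + q < r := by
      by_contra h
      push Not at h
      have := g_mono hr h
      linarith
    rw [hf]; nlinarith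
  have hneg : ∀ V : ℝ, W < V → fV V < 0 := by
    intro V hVW
    obtain ⟨r, hr, hG, hf⟩ := fV_param (hWp.trans hVW)
    have h1 : 1 / V < 1 / W := one_div_lt_one_div_of_lt hWp hVW
    have h2 : r < 1 + q := by
      by_contra h
      push Not at h
      have := g_mono (by linarith) h
      linarith
    rw [hf]; nlinarith
  have hzero : fV W = 0 := by
    obtain ⟨r, hr, hG, hf⟩ := fV_param hWp
    have hmono : StrictMonoOn (fun x : ℝ => (x - 1) * (x + 1) ^ 3 / 4) (Set.Ioi 1) := by
      intro x hx y hy hxy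
      have hx' : (1 : ℝ) < x := hx
      have e1 : 0 < x - 1 := by linarith
      have e2 : 0 < x + 1 := by linarith
      have e3 : 0 < y - 1 := by linarith
      have e4 : x + 1 ≤ y + 1 := by linarith
      have e5 : (x + 1) ^ 3 ≤ (y + 1) ^ 3 := by gcongr
      have e6 : 0 < (x + 1) ^ 3 := by positivity
      show (x - 1) * (x + 1) ^ 3 / 4 < (y - 1) * (y + 1) ^ 3 / 4
      nlinarith
    have h2 : r = 1 + q := by
      apply hmono.injOn hr (show (1 : ℝ) < 1 + q by linarith)
      show (r - 1) * (r + 1) ^ 3 / 4 = (1 + q - 1) * (1 + q + 1) ^ 3 / 4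
      linarith
    rw [hf, h2]; linear_combination 3 / 4 * hq2
  refine ⟨W, ⟨?_, ?_⟩, hzero, ?_, ⟨hWl, hWu⟩, hpos, hneg⟩
  · norm_num at hWl ⊢; linarith
  · norm_num at hWu ⊢; linarith
  · intro V hV h0
    have hV0 : 0 < V := lt_of_lt_of_le (by norm_num) hV.1
    rcases lt_trichotomy V W with h | h | h
    · have := hpos V hV0 h
      linarith
    · exact h
    · have := hneg V h
      linarith
end
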